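/- arXiv:1505.04572 — 2 statements merged into one kernel-verified Lean document; each statement's English description precedes it below -/
import Mathlib

section
/- Let ρ > 0, σ > 0, h(ξ) = ∫_ξ^∞ erfc(η) dη, and define φ_a(ξ) = (ρσ/2)·(√h(ξ/σ) − √h(−ξ/σ))². Then lim_{ξ→∞} φ_a(ξ)/ξ = ρ, and by the evenness φ_a(−ξ) = φ_a(ξ) one has φ_a(ξ) ≃ ρ|ξ| as |ξ| → ∞. -/
open MeasureTheory Real Filter Topology

/-- The complementary error function `erfc(x) = (2/√π) ∫_x^∞ e^{−u²} du`. -/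
noncomputable def erfc (x : ℝ) : ℝ := (2 / Real.sqrt π) * ∫ u in Set.Ioi x, Real.exp (-u ^ 2)

/-- `h(ξ) = ∫_ξ^∞ erfc(η) dη`. -/
noncomputable def hfun (ξ : ℝ) : ℝ := ∫ η in Set.Ioi ξ, erfc η

/-- The annealed large deviation function
`φ_a(ξ) = (ρσ/2)(√h(ξ/σ) − √h(−ξ/σ))²`. -/
noncomputable def φa (ρ σ ξ : ℝ) : ℝ :=
  (ρ * σ / 2) * (Real.sqrt (hfun (ξ / σ)) - Real.sqrt (hfun (-ξ / σ))) ^ 2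

/-!
Since `erfc (-x) + erfc x = 2`, integrating over `[-x, x]` gives `h(-x) = 2x + h(x)`, while
`h(x) → 0` as a tail of an integrable function. Hence `h(x)/x → 0` and `h(-x)/x → 2`, so
`(√h(x) − √h(−x))² / x → 2`, and the substitution `x = ξ/σ` turns this `2` into `ρ`.
-/

theorem integral_neg_self_of_comp_neg_add {E : Type*} [NormedAddCommGroup E] [NormedSpace ℝ E]
    [CompleteSpace E] {f : ℝ → E} {a : ℝ} {c : E}
    (hf : IntervalIntegrable f volume (-a) a) (hc : ∀ x, f (-x) + f x = c) :
    ∫ x in (-a)..a, f x = a • c := by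
  have hreflect : ∫ x in (-a)..a, f x = (2 * a) • c - ∫ x in (-a)..a, f x :=
    calc ∫ x in (-a)..a, f x = ∫ x in (-a)..a, f (-x) := by
          rw [intervalIntegral.integral_comp_neg, neg_neg]
      _ = ∫ x in (-a)..a, (c - f x) := by simp only [eq_sub_of_add_eq (hc _)]
      _ = (2 * a) • c - ∫ x in (-a)..a, f x := by
          rw [intervalIntegral.integral_sub intervalIntegrable_const hf,
            intervalIntegral.integral_const, sub_neg_eq_add, two_mul]
  rw [eq_sub_iff_add_eq, ← two_smul ℝ, mul_smul] at hreflect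
  exact smul_right_injective E two_ne_zero hreflect

theorem tendsto_sqrt_sub_sqrt_sq_div {α : Type*} {l : Filter α} {f g d : α → ℝ} {a b : ℝ}
    (hd : ∀ᶠ x in l, 0 ≤ d x) (hf : Tendsto (fun x => f x / d x) l (𝓝 a))
    (hg : Tendsto (fun x => g x / d x) l (𝓝 b)) :
    Tendsto (fun x => (√(f x) - √(g x)) ^ 2 / d x) l (𝓝 ((√a - √b) ^ 2)) := by
  refine ((hf.sqrt.sub hg.sqrt).pow 2).congr' ?_
  filter_upwards [hd] with x hx
  rw [sqrt_div' _ hx, sqrt_div' _ hx, ← sub_div, div_pow, sq_sqrt hx]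

theorem integrable_exp_neg_sq : Integrable fun u : ℝ => exp (-u ^ 2) := by
  simpa only [neg_one_mul] using integrable_exp_neg_mul_sq one_pos

theorem erfc_nonneg (x : ℝ) : 0 ≤ erfc x :=
  mul_nonneg (by positivity) (integral_nonneg fun _ => (exp_pos _).le)

theorem antitone_erfc : Antitone erfc := fun _ _ hxy =>
  mul_le_mul_of_nonneg_left
    (setIntegral_mono_set integrable_exp_neg_sq.integrableOn
      (Eventually.of_forall fun _ => (exp_pos _).le) (Set.Ioi_subset_Ioi hxy).eventuallyLE)
    (by positivity)

theorem erfc_neg_add_erfc (x : ℝ) : erfc (-x) + erfc x = 2 := by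
  have hreflect : ∫ u in Set.Ioi (-x), exp (-u ^ 2) = ∫ u in Set.Iic x, exp (-u ^ 2) := by
    simp only [← integral_comp_neg_Iic, neg_sq]
  have htotal : ∫ u : ℝ, exp (-u ^ 2) = √π := by
    simpa only [neg_one_mul, div_one] using integral_gaussian 1
  rw [erfc, erfc, ← mul_add, hreflect,
    intervalIntegral.integral_Iic_add_Ioi integrable_exp_neg_sq.integrableOn
      integrable_exp_neg_sq.integrableOn,
    htotal, div_mul_cancel₀ _ (sqrt_pos.2 pi_pos).ne']

theorem erfc_le_exp_one_sub (x : ℝ) : erfc x ≤ 2 / √π * exp (1 - x) := by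
  have hbound (u : ℝ) : exp (-u ^ 2) ≤ exp 1 * exp (-u) := by
    rw [← exp_add]
    exact exp_le_exp.2 (by nlinarith [sq_nonneg (u - 1 / 2)])
  refine mul_le_mul_of_nonneg_left ?_ (by positivity)
  calc ∫ u in Set.Ioi x, exp (-u ^ 2) ≤ ∫ u in Set.Ioi x, exp 1 * exp (-u) :=
        setIntegral_mono integrable_exp_neg_sq.integrableOn
          ((integrableOn_exp_neg_Ioi x).const_mul _) hbound
    _ = exp (1 - x) := by
        rw [integral_const_mul, integral_exp_neg_Ioi, ← exp_add, sub_eq_add_neg]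

theorem integrableOn_erfc_Ioi (a : ℝ) : IntegrableOn erfc (Set.Ioi a) := by
  have hbound : IntegrableOn (fun x : ℝ => 2 / √π * exp (1 - x)) (Set.Ioi a) := by
    simp only [sub_eq_add_neg, exp_add]
    exact ((integrableOn_exp_neg_Ioi a).const_mul _).const_mul _
  refine hbound.mono' antitone_erfc.measurable.aestronglyMeasurable
    (Eventually.of_forall fun x => ?_)
  rw [norm_of_nonneg (erfc_nonneg x)]
  exact erfc_le_exp_one_sub x

theorem tendsto_hfun_atTop : Tendsto hfun atTop (𝓝 0) :=
  tendsto_integral_Ioi_zero tendsto_id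

theorem hfun_neg (x : ℝ) : hfun (-x) = 2 * x + hfun x := by
  rw [← sub_eq_iff_eq_add, hfun, hfun,
    intervalIntegral.integral_Ioi_sub_Ioi' (integrableOn_erfc_Ioi _) (integrableOn_erfc_Ioi _),
    integral_neg_self_of_comp_neg_add antitone_erfc.intervalIntegrable erfc_neg_add_erfc,
    smul_eq_mul, mul_comm]

theorem tendsto_sqrt_hfun_sub_sqrt_hfun_neg_sq_div_atTop :
    Tendsto (fun x => (√(hfun x) - √(hfun (-x))) ^ 2 / x) atTop (𝓝 2) := by
  have hpos : Tendsto (fun x => hfun x / x) atTop (𝓝 0) :=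
    tendsto_hfun_atTop.div_atTop tendsto_id
  have hneg : Tendsto (fun x => hfun (-x) / x) atTop (𝓝 2) := by
    have hshift : Tendsto (fun x => 2 + hfun x / x) atTop (𝓝 2) := by
      simpa only [add_zero] using hpos.const_add 2
    refine hshift.congr' ?_
    filter_upwards [eventually_ne_atTop 0] with x hx
    rw [hfun_neg, add_div, mul_div_cancel_right₀ _ hx]
  simpa using tendsto_sqrt_sub_sqrt_sq_div (eventually_ge_atTop 0) hpos hneg

theorem φa_neg (ρ σ ξ : ℝ) : φa ρ σ (-ξ) = φa ρ σ ξ := by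
  rw [φa, φa, neg_neg, sub_sq_comm]

theorem φa_div {σ : ℝ} (hσ : σ ≠ 0) (ρ ξ : ℝ) :
    φa ρ σ ξ / ξ = ρ / 2 * ((√(hfun (ξ / σ)) - √(hfun (-(ξ / σ)))) ^ 2 / (ξ / σ)) := by
  rw [φa, neg_div]
  field_simp

theorem tendsto_φa_div_atTop (ρ : ℝ) {σ : ℝ} (hσ : 0 < σ) :
    Tendsto (fun ξ => φa ρ σ ξ / ξ) atTop (𝓝 ρ) := by
  have hlim := (tendsto_sqrt_hfun_sub_sqrt_hfun_neg_sq_div_atTop.comp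
    (tendsto_id.atTop_div_const hσ)).const_mul (ρ / 2)
  rw [div_mul_cancel₀ _ two_ne_zero] at hlim
  exact hlim.congr fun ξ => (φa_div hσ.ne' ρ ξ).symm

/-- `lim_{ξ→∞} φ_a(ξ)/ξ = ρ`, and `φ_a` is even, so `φ_a(ξ) ≃ ρ|ξ|` as `|ξ| → ∞`. -/
theorem annealed_ldf_tail (ρ σ : ℝ) (hρ : 0 < ρ) (hσ : 0 < σ) :
    Tendsto (fun ξ : ℝ => φa ρ σ ξ / ξ) atTop (nhds ρ)
    ∧ (∀ ξ : ℝ, φa ρ σ (-ξ) = φa ρ σ ξ) :=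
  ⟨tendsto_φa_div_atTop ρ hσ, φa_neg ρ σ⟩
end

section
/- Let σ > 0, 0 < t₁ < t₂, and y, x₁, x₂, B₁, B₂ be real numbers, and let g(z, t | y, s) = (πσ²(t−s))^{−1/2} exp(−(z−y)²/(σ²(t−s))) for t > s. Then ∫_ℝ ∫_ℝ e^{B₁·1_{u₁>x₁} + B₂·1_{u₂>x₂}} · g(u₂, t₂ | u₁, t₁) · g(u₁, t₁ | y, 0) du₂ du₁ = 1 + ((e^{B₁} − 1)/2)·erfc((x₁ − y)/(σ√t₁)) + ((e^{B₂} − 1)/2)·erfc((x₂ − y)/(σ√t₂)) + (e^{B₁} − 1)(e^{B₂} − 1) · ∫_{x₁}^∞ ∫_{x₂}^∞ g(u₂, t₂ | u₁, t₁) · g(u₁, t₁ | y, 0) du₂ du₁. -/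
open MeasureTheory Real

/-- The Brownian transition density
`g(z, t | y, s) = (πσ²(t−s))^{−1/2} exp(−(z−y)²/(σ²(t−s)))`. -/
noncomputable def g (σ z t y s : ℝ) : ℝ :=
  (Real.sqrt (π * σ ^ 2 * (t - s)))⁻¹ * Real.exp (-(z - y) ^ 2 / (σ ^ 2 * (t - s)))

/-! Since `exp (B * 1_A) = 1 + (exp B - 1) * 1_A`, the double integral splits into the total mass,
the masses of `{u₁ > x₁}` and `{u₂ > x₂}`, and that of their intersection. The position at the first
time has density `g σ · t₁ y 0`, while the Chapman–Kolmogorov equation makes `g σ · t₂ y 0` the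
density of the position at the second time, so the two single-time masses are Gaussian tails. -/

section ExpIndicator

lemma exp_mul_indicator_one_smul {α E : Type*} [AddCommGroup E] [Module ℝ E]
    (B : ℝ) (s : Set α) (f : α → E) (u : α) :
    exp (B * s.indicator (fun _ => (1 : ℝ)) u) • f u = f u + (exp B - 1) • s.indicator f u := by
  by_cases hu : u ∈ s
  · simp [hu, sub_smul]
  · simp [hu]

variable {α β E : Type*} [MeasurableSpace α] [MeasurableSpace β]
  [NormedAddCommGroup E] [NormedSpace ℝ E]

lemma integral_exp_mul_indicator_one_smul {μ : Measure α} {s : Set α} (hs : MeasurableSet s)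
    (B : ℝ) {f : α → E} (hf : Integrable f μ) :
    ∫ u, exp (B * s.indicator (fun _ => (1 : ℝ)) u) • f u ∂μ
      = (∫ u, f u ∂μ) + (exp B - 1) • ∫ u in s, f u ∂μ := by
  simp only [exp_mul_indicator_one_smul]
  rw [integral_add hf ((hf.indicator hs).fun_smul _), integral_smul, integral_indicator hs]

lemma integral_integral_exp_indicator_add_indicator_smul {μ : Measure α} {ν : Measure β}
    [SFinite ν] {s : Set α} {t : Set β} (hs : MeasurableSet s) (ht : MeasurableSet t) (B C : ℝ)
    {f : α → β → E} (hf : Integrable (Function.uncurry f) (μ.prod ν)) :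
    ∫ u, ∫ v, exp (B * s.indicator (fun _ => (1 : ℝ)) u
        + C * t.indicator (fun _ => (1 : ℝ)) v) • f u v ∂ν ∂μ
      = (∫ u, ∫ v, f u v ∂ν ∂μ) + (exp B - 1) • (∫ u in s, ∫ v, f u v ∂ν ∂μ)
        + (exp C - 1) • (∫ u, ∫ v in t, f u v ∂ν ∂μ)
        + ((exp B - 1) * (exp C - 1)) • ∫ u in s, ∫ v in t, f u v ∂ν ∂μ := by
  have inner : ∀ᵐ u ∂μ, ∫ v, exp (B * s.indicator (fun _ => (1 : ℝ)) u
        + C * t.indicator (fun _ => (1 : ℝ)) v) • f u v ∂ν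
      = exp (B * s.indicator (fun _ => (1 : ℝ)) u) •
          ((∫ v, f u v ∂ν) + (exp C - 1) • ∫ v in t, f u v ∂ν) := by
    filter_upwards [((integrable_prod_iff hf.aestronglyMeasurable).mp hf).1] with u hu
    simp only [exp_add, mul_smul, integral_smul]
    rw [integral_exp_mul_indicator_one_smul ht C (f := f u) hu]
  have total : Integrable (fun u => ∫ v, f u v ∂ν) μ := hf.integral_prod_left
  have hft : Integrable (Function.uncurry f) (μ.prod (ν.restrict t)) :=
    hf.mono_measure (Measure.prod_mono le_rfl Measure.restrict_le_self)
  have tail : Integrable (fun u => (exp C - 1) • ∫ v in t, f u v ∂ν) μ :=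
    hft.integral_prod_left.fun_smul _
  rw [integral_congr_ae inner, integral_exp_mul_indicator_one_smul hs B (total.fun_add tail),
    integral_add total tail, integral_add total.integrableOn tail.integrableOn,
    integral_smul, integral_smul]
  module

end ExpIndicator

section TransitionDensity

variable {σ r s t : ℝ}

lemma g_nonneg (σ z t y s : ℝ) : 0 ≤ g σ z t y s := by
  unfold g
  positivity

lemma continuous_g (σ t s : ℝ) : Continuous fun p : ℝ × ℝ => g σ p.1 t p.2 s := by
  unfold g
  fun_prop

lemma g_eq_gaussianPDFReal (σ y : ℝ) (hst : s ≤ t) :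
    (fun z => g σ z t y s)
      = ProbabilityTheory.gaussianPDFReal y (σ ^ 2 * (t - s) / 2).toNNReal := by
  have hv : 0 ≤ σ ^ 2 * (t - s) / 2 := by
    have := sub_nonneg.mpr hst
    positivity
  ext z
  rw [g, ProbabilityTheory.gaussianPDFReal, coe_toNNReal _ hv]
  ring_nf

lemma integrable_g (σ y : ℝ) (hst : s ≤ t) : Integrable fun z => g σ z t y s := by
  rw [g_eq_gaussianPDFReal σ y hst]
  exact ProbabilityTheory.integrable_gaussianPDFReal _ _

lemma integral_g (hσ : σ ≠ 0) (hst : s < t) (y : ℝ) : ∫ z, g σ z t y s = 1 := by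
  have hv : 0 < σ ^ 2 * (t - s) / 2 := by
    have := sub_pos.mpr hst
    positivity
  rw [g_eq_gaussianPDFReal σ y hst.le]
  exact ProbabilityTheory.integral_gaussianPDFReal_eq_one y (toNNReal_pos.mpr hv).ne'

/-- Completing the square in `u`: the last factor is the density at `u` of the Brownian bridge from
`(r, y)` to `(t, z)`, observed at time `s`. -/
lemma g_mul_g_eq_g_mul_bridge (hσ : σ ≠ 0) (hrs : r < s) (hst : s < t) (z u y : ℝ) :
    g σ z t u s * g σ u s y r
      = g σ z t y r *
        g σ u ((t - s) * (s - r) / (t - r)) (((s - r) * z + (t - s) * y) / (t - r)) 0 := by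
  obtain ⟨a, ha, rfl⟩ : ∃ a, 0 < a ∧ s = r + a := ⟨s - r, sub_pos.mpr hrs, by ring⟩
  obtain ⟨b, hb, rfl⟩ : ∃ b, 0 < b ∧ t = r + a + b := ⟨t - (r + a), sub_pos.mpr hst, by ring⟩
  have hab : r + a + b - r = a + b := by ring
  have normalization : (√(π * σ ^ 2 * b))⁻¹ * (√(π * σ ^ 2 * a))⁻¹
      = (√(π * σ ^ 2 * (a + b)))⁻¹ * (√(π * σ ^ 2 * (b * a / (a + b))))⁻¹ := by
    rw [← mul_inv, ← mul_inv, ← sqrt_mul (by positivity), ← sqrt_mul (by positivity)]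
    field_simp
  have exponent : -(z - u) ^ 2 / (σ ^ 2 * b) + -(u - y) ^ 2 / (σ ^ 2 * a)
      = -(z - y) ^ 2 / (σ ^ 2 * (a + b))
        + -(u - (a * z + b * y) / (a + b)) ^ 2 / (σ ^ 2 * (b * a / (a + b))) := by
    field_simp
    ring
  simp only [g, hab, add_sub_cancel_left, sub_zero]
  rw [mul_mul_mul_comm, normalization, ← exp_add, exponent, exp_add, mul_mul_mul_comm]

theorem integral_g_mul_g (hσ : σ ≠ 0) (hrs : r < s) (hst : s < t) (z y : ℝ) :
    ∫ u, g σ z t u s * g σ u s y r = g σ z t y r := by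
  have hτ : 0 < (t - s) * (s - r) / (t - r) :=
    div_pos (mul_pos (sub_pos.mpr hst) (sub_pos.mpr hrs)) (sub_pos.mpr (hrs.trans hst))
  simp only [g_mul_g_eq_g_mul_bridge hσ hrs hst, integral_const_mul, integral_g hσ hτ, mul_one]

lemma integrable_uncurry_g_mul_g (hσ : σ ≠ 0) (hrs : r ≤ s) (hst : s < t) (y : ℝ) :
    Integrable (Function.uncurry fun u v => g σ v t u s * g σ u s y r) (volume.prod volume) := by
  have hcont : Continuous (Function.uncurry fun u v => g σ v t u s * g σ u s y r) :=
    ((continuous_g σ t s).comp continuous_swap).mul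
      ((continuous_g σ s r).comp (continuous_fst.prodMk continuous_const))
  refine (integrable_prod_iff hcont.aestronglyMeasurable).mpr
    ⟨ae_of_all _ fun u => (integrable_g σ u hst.le).mul_const (g σ u s y r), ?_⟩
  simpa only [Function.uncurry_apply_pair, norm_mul, norm_of_nonneg (g_nonneg _ _ _ _ _),
    integral_mul_const, integral_g hσ hst, one_mul] using integrable_g σ y hrs

lemma integral_setIntegral_g_mul_g (hσ : σ ≠ 0) (hrs : r < s) (hst : s < t) (y : ℝ) (A : Set ℝ) :
    ∫ u, ∫ v in A, g σ v t u s * g σ u s y r = ∫ v in A, g σ v t y r := by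
  have hint := (integrable_uncurry_g_mul_g hσ hrs.le hst y).mono_measure
    (Measure.prod_mono le_rfl (Measure.restrict_le_self (s := A)))
  simp only [integral_integral_swap hint, integral_g_mul_g hσ hrs hst]

lemma g_add_mul_sqrt (hσ : 0 < σ) (hst : s < t) (y w : ℝ) :
    g σ (y + σ * √(t - s) * w) t y s = (σ * √(t - s))⁻¹ * ((√π)⁻¹ * exp (-w ^ 2)) := by
  have hτ : 0 < t - s := sub_pos.mpr hst
  have hexp : -(y + σ * √(t - s) * w - y) ^ 2 / (σ ^ 2 * (t - s)) = -w ^ 2 := by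
    rw [add_sub_cancel_left, mul_pow, mul_pow, sq_sqrt hτ.le]
    field_simp
  rw [g, hexp, sqrt_mul (by positivity), sqrt_mul pi_pos.le, sqrt_sq hσ.le]
  ring

lemma setIntegral_Ioi_g (hσ : 0 < σ) (hst : s < t) (x y : ℝ) :
    ∫ z in Set.Ioi x, g σ z t y s = erfc ((x - y) / (σ * √(t - s))) / 2 := by
  have hc : 0 < σ * √(t - s) := mul_pos hσ (sqrt_pos.mpr (sub_pos.mpr hst))
  calc ∫ z in Set.Ioi x, g σ z t y s
      = ∫ w in Set.Ioi (x - y), g σ (y + w) t y s := by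
        rw [← (measurePreserving_add_left volume y).setIntegral_preimage_emb
          (measurableEmbedding_addLeft y) (fun z => g σ z t y s), Set.preimage_const_add_Ioi]
    _ = (σ * √(t - s)) *
          ∫ w in Set.Ioi ((x - y) / (σ * √(t - s))), g σ (y + σ * √(t - s) * w) t y s := by
        rw [integral_comp_mul_left_Ioi (fun w => g σ (y + w) t y s) _ hc,
          mul_div_cancel₀ _ hc.ne', smul_eq_mul, mul_inv_cancel_left₀ hc.ne']
    _ = erfc ((x - y) / (σ * √(t - s))) / 2 := by
        simp only [g_add_mul_sqrt hσ hst, integral_const_mul, mul_inv_cancel_left₀ hc.ne', erfc]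
        ring

end TransitionDensity

/-- The two-time single-particle contribution:
`∫∫ e^{B₁·1_{u₁>x₁} + B₂·1_{u₂>x₂}} g(u₂,t₂|u₁,t₁) g(u₁,t₁|y,0) du₂ du₁
 = 1 + ((e^{B₁}−1)/2)·erfc((x₁−y)/(σ√t₁)) + ((e^{B₂}−1)/2)·erfc((x₂−y)/(σ√t₂))
   + (e^{B₁}−1)(e^{B₂}−1) ∫_{x₁}^∞ ∫_{x₂}^∞ g(u₂,t₂|u₁,t₁) g(u₁,t₁|y,0) du₂ du₁`. -/
theorem two_time_single_particle_contribution (σ t₁ t₂ : ℝ) (hσ : 0 < σ)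
    (ht₁ : 0 < t₁) (ht₁₂ : t₁ < t₂) (y x₁ x₂ B₁ B₂ : ℝ) :
    (∫ u₁ : ℝ, ∫ u₂ : ℝ,
        Real.exp (B₁ * (Set.Ioi x₁).indicator (fun _ => (1 : ℝ)) u₁
            + B₂ * (Set.Ioi x₂).indicator (fun _ => (1 : ℝ)) u₂) *
          (g σ u₂ t₂ u₁ t₁ * g σ u₁ t₁ y 0))
      = 1 + (Real.exp B₁ - 1) / 2 * erfc ((x₁ - y) / (σ * Real.sqrt t₁))
          + (Real.exp B₂ - 1) / 2 * erfc ((x₂ - y) / (σ * Real.sqrt t₂))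
          + (Real.exp B₁ - 1) * (Real.exp B₂ - 1) *
              ∫ u₁ in Set.Ioi x₁, ∫ u₂ in Set.Ioi x₂,
                g σ u₂ t₂ u₁ t₁ * g σ u₁ t₁ y 0 := by
  have first_marginal (u₁ : ℝ) :
      ∫ u₂, g σ u₂ t₂ u₁ t₁ * g σ u₁ t₁ y 0 = g σ u₁ t₁ y 0 := by
    rw [integral_mul_const, integral_g hσ.ne' ht₁₂, one_mul]
  have second_marginal :
      ∫ u₁, ∫ u₂ in Set.Ioi x₂, g σ u₂ t₂ u₁ t₁ * g σ u₁ t₁ y 0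
        = ∫ u₂ in Set.Ioi x₂, g σ u₂ t₂ y 0 :=
    integral_setIntegral_g_mul_g hσ.ne' ht₁ ht₁₂ y _
  have expansion := integral_integral_exp_indicator_add_indicator_smul
    (measurableSet_Ioi (a := x₁)) (measurableSet_Ioi (a := x₂)) B₁ B₂
    (integrable_uncurry_g_mul_g hσ.ne' ht₁.le ht₁₂ y)
  simp only [smul_eq_mul, first_marginal, second_marginal] at expansion
  rw [expansion, integral_g hσ.ne' ht₁, setIntegral_Ioi_g hσ ht₁,
    setIntegral_Ioi_g hσ (ht₁.trans ht₁₂), sub_zero, sub_zero]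
  ring
end
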